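/- Let B2(t, y) be the 6×6 matrix with rows [-y, yt, t, 0, yt, -y], [-y, y(t-1), 0, y^2(t-1), yt, -y], [0, y(t-1), 0, y^2(t-1), 0, -y], [-y, 0, t-1, 0, y(t-1), 0], [-y, yt, t-1, 0, y(t-1), -y], [-y, yt, 0, y^2 t, yt, -y] over the polynomial ring ℚ[t, y]. Then det(I - x*B2) = c(xy, t) + d(xy, t)*(x + x*y^2), where c(p,t) = p^6 t^2 - 2p^5 t^3 + p^4 t^4 + 4p^5 t^2 - 4p^4 t^3 - 2p^5 t + 6p^4 t^2 - 4p^4 t + 2p^3 t - p^2 t^2 + 4p^2 - 2pt + 4p + 1 and d(p,t) = -p^2 * t * (2 + p - t)^2. -/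

import Mathlib

open MvPolynomial

/-- The ring `ℚ[t, y, x]`, with `t = X 0`, `y = X 1`, `x = X 2`. -/
abbrev R3 : Type := MvPolynomial (Fin 3) ℚ

noncomputable def tv : R3 := X 0
noncomputable def yv : R3 := X 1
noncomputable def xv : R3 := X 2

/-- The matrix `B2(t, y)` from the ternary menage problem. -/
noncomputable def B2 : Matrix (Fin 6) (Fin 6) R3 :=
  !![-yv, yv * tv, tv, 0, yv * tv, -yv;
     -yv, yv * (tv - 1), 0, yv ^ 2 * (tv - 1), yv * tv, -yv;
     0, yv * (tv - 1), 0, yv ^ 2 * (tv - 1), 0, -yv;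
     -yv, 0, tv - 1, 0, yv * (tv - 1), 0;
     -yv, yv * tv, tv - 1, 0, yv * (tv - 1), -yv;
     -yv, yv * tv, 0, yv ^ 2 * tv, yv * tv, -yv]

/-- The polynomial `c(p, t)`. -/
noncomputable def cPoly (p t : R3) : R3 :=
  p ^ 6 * t ^ 2 - 2 * p ^ 5 * t ^ 3 + p ^ 4 * t ^ 4 + 4 * p ^ 5 * t ^ 2 - 4 * p ^ 4 * t ^ 3 -
    2 * p ^ 5 * t + 6 * p ^ 4 * t ^ 2 - 4 * p ^ 4 * t + 2 * p ^ 3 * t - p ^ 2 * t ^ 2 +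
    4 * p ^ 2 - 2 * p * t + 4 * p + 1

/-- The polynomial `d(p, t) = -p^2 t (2 + p - t)^2`. -/
noncomputable def dPoly (p t : R3) : R3 := -(p ^ 2) * t * (2 + p - t) ^ 2

/-!
Reversing the order of the six indices exchanges the roles of `x` and `x * y ^ 2` in `x • B2` and
leaves everything else unchanged. Pairing each index with its mirror image therefore turns
`x • B2` into a `3 × 3` array of `2 × 2` blocks built from `p = x * y`, `t`, the swap matrix `J` and
`Δ = diag(x, x * y ^ 2)`. With `w = 1 + p - t`, the relation `J * J = 1`, unimodular row operations
and one Schur complement reduce `1 - x • B2` to a `2 × 2` array of blocks whose lower left corner is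
scalar, so that the determinant is
`det (1 + p * (1 + w) + w * J * (p + Δ) + p * (w ^ 2 - p * (1 + w)) * Δ)`.
This `2 × 2` determinant is affine in the trace `x + x * y ^ 2` and the determinant
`x * (x * y ^ 2) = p ^ 2` of `Δ`.
-/

open Matrix

section CommutingBlocks

variable {m R : Type*} [Fintype m] [DecidableEq m] [CommRing R]

theorem det_fromBlocks_mul_det_of_commute (A B : Matrix m m R) {C D : Matrix m m R}
    (h : Commute C D) :
    (fromBlocks A B C D).det * D.det = (A * D - B * C).det * D.det := by
  have factor :
      fromBlocks A B C D * fromBlocks D 0 (-C) 1 = fromBlocks (A * D - B * C) B 0 D := by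
    simp [fromBlocks_multiply, h.eq, sub_eq_add_neg]
  simpa [det_mul] using congrArg det factor

-- Replacing `D` by `D + X` keeps the blocks commuting and makes `det D` monic, hence cancellable;
-- then set `X = 0`.
theorem det_fromBlocks_of_commute (A B : Matrix m m R) {C D : Matrix m m R}
    (h : Commute C D) : (fromBlocks A B C D).det = (A * D - B * C).det := by
  let const : Matrix m m R →+* Matrix m m (Polynomial R) := Polynomial.C.mapMatrix
  let eval₀ : Polynomial R →+* R := Polynomial.evalRingHom 0
  have eval_const (M : Matrix m m R) : eval₀.mapMatrix (const M) = M := by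
    ext
    simp [const, eval₀]
  have eval_charmatrix : eval₀.mapMatrix (charmatrix (-D)) = D := by
    ext i j
    by_cases hij : i = j <;> simp [eval₀, hij]
  have commute_charmatrix : Commute (const C) (charmatrix (-D)) :=
    (scalar_commute Polynomial.X (Commute.all _) (const C)).symm.sub_right (h.neg_right.map const)
  have det_charmatrix :
      (fromBlocks (const A) (const B) (const C) (charmatrix (-D))).det =
        (const A * charmatrix (-D) - const B * const C).det :=
    (charpoly_monic (-D)).isRegular.right
      (det_fromBlocks_mul_det_of_commute (const A) (const B) commute_charmatrix)
  have eval_fromBlocks :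
      eval₀.mapMatrix (fromBlocks (const A) (const B) (const C) (charmatrix (-D))) =
        fromBlocks A B C D := by
    rw [RingHom.mapMatrix_apply, fromBlocks_map]
    simp only [← RingHom.mapMatrix_apply, eval_const, eval_charmatrix]
  simpa only [RingHom.map_det, eval_fromBlocks, map_sub, map_mul, eval_const, eval_charmatrix]
    using congrArg eval₀ det_charmatrix

end CommutingBlocks

section MenageBlockMatrix

variable {m R : Type*} [Fintype m] [DecidableEq m] [CommRing R]

/-- The block form of `x • B2`, with `p = x * y`, when mirror-image indices are paired: `J` is the
involution exchanging the two indices of a pair, and `Δ` carries the weights of the third pair of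
columns, the only ones whose power of `y` differs from that of `x`. The `2 × 2` matrix of ones
of the concrete case is encoded as `1 + J`. -/
def menageBlockMatrix (t p : R) (J Δ : Matrix m m R) : Matrix (m ⊕ m ⊕ m) (m ⊕ m ⊕ m) R :=
  fromBlocks
    (-p • (1 + J)) (fromCols ((p * t) • (1 + J)) (t • Δ))
    (fromRows (-p • (1 + J)) (-p • J))
    (fromBlocks
      ((p * t) • (1 + J) - p • 1) ((t - 1) • (J * Δ))
      ((p * (t - 1)) • 1) ((t - 1) • (J * Δ)))

/-- The unimodular row operation that subtracts `J` times the second block row from the first and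
the third block row from the second; it makes the upper left block of
`1 - menageBlockMatrix t p J Δ` the identity. -/
def menageRowReduction (J : Matrix m m R) : Matrix (m ⊕ m ⊕ m) (m ⊕ m ⊕ m) R :=
  fromBlocks 1 (fromCols (-J) 0) 0 (fromBlocks 1 (-1) 0 1)

theorem det_menageRowReduction (J : Matrix m m R) : (menageRowReduction J).det = 1 := by
  simp [menageRowReduction]

theorem menageRowReduction_mul_one_sub_menageBlockMatrix (t p : R) {J : Matrix m m R}
    (hJ : J * J = 1) (Δ : Matrix m m R) :
    menageRowReduction J * (1 - menageBlockMatrix t p J Δ) =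
      fromBlocks 1 (fromCols (-(1 + p) • J) (-Δ)) (fromRows (p • 1) (p • J))
        (fromBlocks (1 - (p * t) • J) (-1) ((p * (1 - t)) • 1) (1 + (1 - t) • (J * Δ))) := by
  have hJΔ : J * (J * Δ) = Δ := by rw [← mul_assoc, hJ, one_mul]
  have one_eq_fromBlocks : (1 : Matrix (m ⊕ m ⊕ m) (m ⊕ m ⊕ m) R) =
      fromBlocks 1 (fromCols 0 0) (fromRows 0 0) (fromBlocks 1 0 0 1) := by
    simp [fromBlocks_one]
  rw [one_eq_fromBlocks, menageRowReduction, menageBlockMatrix]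
  ext (i | i | i) (j | j | j) <;>
    simp [fromBlocks_multiply, fromBlocks_neg, fromCols_mul_fromBlocks, fromCols_mul_fromRows,
      fromBlocks_mul_fromRows, sub_eq_add_neg, mul_add, hJ, hJΔ] <;> ring

theorem schurComplement_menage (t p : R) {J : Matrix m m R} (hJ : J * J = 1) (Δ : Matrix m m R) :
    fromBlocks (1 - (p * t) • J) (-1) ((p * (1 - t)) • 1) (1 + (1 - t) • (J * Δ)) -
        fromRows (p • 1) (p • J) * fromCols (-(1 + p) • J) (-Δ) =
      fromBlocks (1 + (p * (1 + p - t)) • J) (p • Δ - 1)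
        ((p * (2 + p - t)) • 1) (1 + (1 + p - t) • (J * Δ)) := by
  rw [fromRows_mul_fromCols]
  ext (i | i) (j | j) <;> simp [hJ] <;> ring

theorem det_one_sub_menageBlockMatrix (t p : R) {J : Matrix m m R} (hJ : J * J = 1)
    (Δ : Matrix m m R) :
    (1 - menageBlockMatrix t p J Δ).det =
      ((1 + p * (2 + p - t)) • 1 + (1 + p - t) • (J * (p • 1 + Δ)) +
        (p * ((1 + p - t) ^ 2 - p * (2 + p - t))) • Δ).det := by
  have hJΔ : J * (J * Δ) = Δ := by rw [← mul_assoc, hJ, one_mul]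
  calc
    _ = (menageRowReduction J * (1 - menageBlockMatrix t p J Δ)).det := by
      rw [det_mul, det_menageRowReduction, one_mul]
    _ = (fromBlocks (1 + (p * (1 + p - t)) • J) (p • Δ - 1)
          ((p * (2 + p - t)) • 1) (1 + (1 + p - t) • (J * Δ))).det := by
      rw [menageRowReduction_mul_one_sub_menageBlockMatrix t p hJ, det_fromBlocks_one₁₁,
        schurComplement_menage t p hJ]
    _ = _ := by
      rw [det_fromBlocks_of_commute _ _ ((Commute.one_left _).smul_left _)]
      congr 1
      simp only [add_mul, mul_add, smul_mul_assoc, mul_smul_comm, one_mul, mul_one, hJΔ]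
      module

theorem det_one_sub_menageBlockMatrix_swap (t p a b : R) :
    (1 - menageBlockMatrix t p !![0, 1; 1, 0] !![a, 0; 0, b]).det =
      (1 + p * (2 + p - t)) ^ 2 - (p * (1 + p - t)) ^ 2 - p ^ 2 * t * (2 + p - t) ^ 2 * (a + b) +
        (p ^ 2 * ((1 + p - t) ^ 2 - p * (2 + p - t)) ^ 2 - (1 + p - t) ^ 2) * (a * b) := by
  rw [det_one_sub_menageBlockMatrix t p (by simp [one_fin_two]), det_fin_two]
  simp [one_fin_two]
  ring

end MenageBlockMatrix

section TernaryMenage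

variable {R : Type*} [CommRing R]

/-- The matrix `B2(t, y)` of the ternary menage problem with entries in an arbitrary commutative
ring. -/
def ternaryMenageMatrix (t y : R) : Matrix (Fin 6) (Fin 6) R :=
  !![-y, y * t, t, 0, y * t, -y;
     -y, y * (t - 1), 0, y ^ 2 * (t - 1), y * t, -y;
     0, y * (t - 1), 0, y ^ 2 * (t - 1), 0, -y;
     -y, 0, t - 1, 0, y * (t - 1), 0;
     -y, y * t, t - 1, 0, y * (t - 1), -y;
     -y, y * t, 0, y ^ 2 * t, y * t, -y]

/-- The enumeration of the six indices by the pairs `{0, 5}`, `{1, 4}`, `{2, 3}` of mirror images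
under `i ↦ 5 - i`, in this order; it brings `B2` into block form. -/
noncomputable def reversalPairs : Fin 2 ⊕ Fin 2 ⊕ Fin 2 ≃ Fin 6 :=
  .ofBijective (Sum.elim ![0, 5] (Sum.elim ![1, 4] ![2, 3])) (by decide)

theorem smul_ternaryMenageMatrix_submatrix_reversalPairs (t y x : R) :
    (x • ternaryMenageMatrix t y).submatrix reversalPairs reversalPairs =
      menageBlockMatrix t (x * y) !![0, 1; 1, 0] !![x, 0; 0, x * y ^ 2] := by
  ext (i | i | i) (j | j | j) <;> fin_cases i <;> fin_cases j <;>
    simp [reversalPairs, ternaryMenageMatrix, menageBlockMatrix, one_fin_two] <;> ring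

theorem det_one_sub_smul_B2_general (t y x : R) :
    (1 - x • ternaryMenageMatrix t y).det =
      ((x * y) ^ 6 * t ^ 2 - 2 * (x * y) ^ 5 * t ^ 3 + (x * y) ^ 4 * t ^ 4 +
          4 * (x * y) ^ 5 * t ^ 2 - 4 * (x * y) ^ 4 * t ^ 3 - 2 * (x * y) ^ 5 * t +
          6 * (x * y) ^ 4 * t ^ 2 - 4 * (x * y) ^ 4 * t + 2 * (x * y) ^ 3 * t -
          (x * y) ^ 2 * t ^ 2 + 4 * (x * y) ^ 2 - 2 * (x * y) * t + 4 * (x * y) + 1) +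
        -((x * y) ^ 2) * t * (2 + x * y - t) ^ 2 * (x + x * y ^ 2) := by
  rw [← det_submatrix_equiv_self reversalPairs, submatrix_sub, Pi.sub_apply, Pi.sub_apply,
    submatrix_one_equiv, smul_ternaryMenageMatrix_submatrix_reversalPairs,
    det_one_sub_menageBlockMatrix_swap]
  ring

end TernaryMenage

/-- `det(I - x * B2) = c(xy, t) + d(xy, t) * (x + x y^2)` in `ℚ[t, y, x]`. -/
theorem det_one_sub_smul_B2 :
    Matrix.det (1 - xv • B2) =
      cPoly (xv * yv) tv + dPoly (xv * yv) tv * (xv + xv * yv ^ 2) :=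
  det_one_sub_smul_B2_general tv yv xv
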